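/- Fix an integer n ≥ 1, reals ν ∈ ℝ, λ > 0, and T > 0. Let f : ℝ × [0, T) → ℝ be C^∞ with f > 0 and f_ρ > 0 everywhere, satisfying ∂f/∂t = f_ρρ/f_ρ + n·f_ρ/f − ν/λ. Let 0 < ε < T and suppose there exists (ρ*, t*) ∈ ℝ × [0, T − ε] at which the function f_ρρ/f_ρ attains its infimum over ℝ × [0, T − ε]. Then (f_ρρ/f_ρ)(ρ*, t*) ≥ min( inf_{σ ∈ ℝ} (f_ρρ/f_ρ)(σ, 0), (f_ρ/f)(ρ*, t*) ). In particular, f_ρρ/f_ρ ≥ min( inf_{σ ∈ ℝ} (f_ρρ/f_ρ)(σ, 0), 0 ) everywhere on ℝ × [0, T − ε]. -/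

import Mathlib

open Set

/-- Partial derivative in the first (spatial) variable `ρ` of a function of `(ρ, t)`. -/
noncomputable def dRho (g : ℝ → ℝ → ℝ) : ℝ → ℝ → ℝ :=
  fun ρ t => deriv (fun s => g s t) ρ

/-! Write `u = f_ρρ / f_ρ` and `w = f_ρ / f`, so that the equation is `f_t = u + n w - ν / λ` and
`w_ρ = w (u - w)`. Differentiating it twice in `ρ` and commuting the derivatives gives
`f_ρ u_t = u_ρρ + (n w - u) u_ρ - 2 n w² (u - w)`. At a minimum of `u` over the past, `u_t ≤ 0`,
`u_ρ = 0` and `u_ρρ ≥ 0`, which forces `u ≥ w` there. -/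

open Filter Topology

/-- Partial derivative in the second (time) variable `t` of a function of `(ρ, t)`. -/
noncomputable def dTime (g : ℝ → ℝ → ℝ) : ℝ → ℝ → ℝ :=
  fun ρ t => deriv (fun s => g ρ s) t

/-- Logarithmic derivative `g_ρ / g` in the spatial variable: `f_ρ / f` is `logDRho f` and
`f_ρρ / f_ρ` is `logDRho (dRho f)`. It takes the junk value `0` where `g` vanishes. -/
noncomputable def logDRho (g : ℝ → ℝ → ℝ) : ℝ → ℝ → ℝ :=
  fun ρ t => dRho g ρ t / g ρ t

section LocalMin

variable {v : ℝ → ℝ} {x : ℝ}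

lemma deriv_deriv_nonneg_of_isLocalMin (hmin : IsLocalMin v x) (hv : ContinuousAt v x) :
    0 ≤ deriv (deriv v) x := by
  by_contra! hneg
  have hmax : IsLocalMax v x := isLocalMax_of_deriv_deriv_neg hneg hmin.deriv_eq_zero hv
  have hconst : v =ᶠ[𝓝 x] fun _ => v x := by
    filter_upwards [hmin, hmax] with y hle hge using le_antisymm hge hle
  simp [hconst.deriv.deriv_eq] at hneg

lemma deriv_nonpos_of_isLocalMinOn_Iic (hmin : IsLocalMinOn v (Iic x) x) : deriv v x ≤ 0 := by
  by_cases hv : DifferentiableAt ℝ v x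
  · have hleft : (-1 : ℝ) ∈ posTangentConeAt (Iic x) x := by
      refine mem_posTangentConeAt_of_segment_subset ?_
      rw [segment_symm, segment_eq_Icc (by linarith)]
      exact Icc_subset_Iic_self
    simpa using hmin.hasFDerivWithinAt_nonneg hv.hasDerivAt.hasFDerivAt.hasFDerivWithinAt hleft
  · exact (deriv_zero_of_not_differentiableAt hv).le

end LocalMin

section PartialDerivatives

variable {g : ℝ → ℝ → ℝ} {ρ t : ℝ}

lemma hasDerivAt_dRho (hg : DifferentiableAt ℝ (Function.uncurry g) (ρ, t)) :
    HasDerivAt (fun s => g s t) (dRho g ρ t) ρ :=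
  (hg.comp (f := fun s : ℝ => (s, t)) ρ (by fun_prop)).hasDerivAt

lemma hasDerivAt_dTime (hg : DifferentiableAt ℝ (Function.uncurry g) (ρ, t)) :
    HasDerivAt (fun s => g ρ s) (dTime g ρ t) t :=
  (hg.comp (f := fun s : ℝ => (ρ, s)) t (by fun_prop)).hasDerivAt

lemma dRho_eq_fderiv (hg : DifferentiableAt ℝ (Function.uncurry g) (ρ, t)) :
    dRho g ρ t = fderiv ℝ (Function.uncurry g) (ρ, t) (1, 0) :=
  (hg.hasFDerivAt.comp_hasDerivAt (f := fun s : ℝ => (s, t)) ρ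
    ((hasDerivAt_id ρ).prodMk (hasDerivAt_const ρ t))).deriv

lemma dTime_eq_fderiv (hg : DifferentiableAt ℝ (Function.uncurry g) (ρ, t)) :
    dTime g ρ t = fderiv ℝ (Function.uncurry g) (ρ, t) (0, 1) :=
  (hg.hasFDerivAt.comp_hasDerivAt (f := fun s : ℝ => (ρ, s)) t
    ((hasDerivAt_const t ρ).prodMk (hasDerivAt_id t))).deriv

lemma uncurry_dRho_eventuallyEq_fderiv {p : ℝ × ℝ} (hg : ContDiffAt ℝ 1 (Function.uncurry g) p) :
    Function.uncurry (dRho g) =ᶠ[𝓝 p] fun q => fderiv ℝ (Function.uncurry g) q (1, 0) := by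
  filter_upwards [hg.eventually (by simp)] with q hq
  exact dRho_eq_fderiv (hq.differentiableAt one_ne_zero)

lemma uncurry_dTime_eventuallyEq_fderiv {p : ℝ × ℝ} (hg : ContDiffAt ℝ 1 (Function.uncurry g) p) :
    Function.uncurry (dTime g) =ᶠ[𝓝 p] fun q => fderiv ℝ (Function.uncurry g) q (0, 1) := by
  filter_upwards [hg.eventually (by simp)] with q hq
  exact dTime_eq_fderiv (hq.differentiableAt one_ne_zero)

lemma contDiffAt_dRho {k m : WithTop ℕ∞} {p : ℝ × ℝ}
    (hg : ContDiffAt ℝ m (Function.uncurry g) p) (hkm : k + 1 ≤ m) :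
    ContDiffAt ℝ k (Function.uncurry (dRho g)) p :=
  ((hg.fderiv_right hkm).clm_apply contDiffAt_const).congr_of_eventuallyEq
    (uncurry_dRho_eventuallyEq_fderiv (hg.of_le (le_add_self.trans hkm)))

lemma dTime_dRho_comm (hg : ContDiffAt ℝ 2 (Function.uncurry g) (ρ, t)) :
    dTime (dRho g) ρ t = dRho (dTime g) ρ t := by
  have hg₁ : ContDiffAt ℝ 1 (Function.uncurry g) (ρ, t) := hg.of_le one_le_two
  have hfderiv : DifferentiableAt ℝ (fderiv ℝ (Function.uncurry g)) (ρ, t) :=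
    (hg.fderiv_right (m := 1) (by norm_num)).differentiableAt one_ne_zero
  have happly (v w : ℝ × ℝ) : fderiv ℝ (fun q => fderiv ℝ (Function.uncurry g) q v) (ρ, t) w =
      fderiv ℝ (fderiv ℝ (Function.uncurry g)) (ρ, t) w v := by
    simp [fderiv_clm_apply hfderiv (differentiableAt_const v)]
  have hdiff (v : ℝ × ℝ) :
      DifferentiableAt ℝ (fun q => fderiv ℝ (Function.uncurry g) q v) (ρ, t) :=
    hfderiv.clm_apply (differentiableAt_const v)
  have hRho := uncurry_dRho_eventuallyEq_fderiv hg₁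
  have hTime := uncurry_dTime_eventuallyEq_fderiv hg₁
  rw [dTime_eq_fderiv (hRho.differentiableAt_iff.2 (hdiff _)), hRho.fderiv_eq, happly,
    dRho_eq_fderiv (hTime.differentiableAt_iff.2 (hdiff _)), hTime.fderiv_eq, happly]
  exact hg.isSymmSndFDerivAt (by simp) _ _

end PartialDerivatives

section LogDerivative

variable {g : ℝ → ℝ → ℝ} {ρ t : ℝ}

lemma contDiffAt_logDRho {k m : WithTop ℕ∞} {p : ℝ × ℝ}
    (hg : ContDiffAt ℝ m (Function.uncurry g) p) (hkm : k + 1 ≤ m)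
    (hg₀ : Function.uncurry g p ≠ 0) : ContDiffAt ℝ k (Function.uncurry (logDRho g)) p :=
  (contDiffAt_dRho hg hkm).div (hg.of_le (le_self_add.trans hkm)) hg₀

lemma hasDerivAt_logDRho (hg : ContDiffAt ℝ 2 (Function.uncurry g) (ρ, t)) (hg₀ : g ρ t ≠ 0)
    (hg₁ : dRho g ρ t ≠ 0) :
    HasDerivAt (fun s => logDRho g s t)
      (logDRho g ρ t * (logDRho (dRho g) ρ t - logDRho g ρ t)) ρ := by
  have hdRho := (contDiffAt_dRho (k := 1) hg (by norm_num)).differentiableAt one_ne_zero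
  refine ((hasDerivAt_dRho hdRho).div
    (hasDerivAt_dRho (hg.differentiableAt two_ne_zero)) hg₀).congr_deriv ?_
  simp only [logDRho]
  field_simp

lemma mul_dTime_logDRho (hg : ContDiffAt ℝ 2 (Function.uncurry g) (ρ, t)) (hg₀ : g ρ t ≠ 0) :
    g ρ t * dTime (logDRho g) ρ t = dTime (dRho g) ρ t - logDRho g ρ t * dTime g ρ t := by
  have hdRho := (contDiffAt_dRho (k := 1) hg (by norm_num)).differentiableAt one_ne_zero
  have hquot : dTime (logDRho g) ρ t = _ := ((hasDerivAt_dTime hdRho).div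
    (hasDerivAt_dTime (hg.differentiableAt two_ne_zero)) hg₀).deriv
  rw [hquot, logDRho]
  field_simp

end LogDerivative

section Evolution

variable {f : ℝ → ℝ → ℝ} {κ c ρ t : ℝ}

lemma dTime_dRho_of_pde (hf : ContDiffAt ℝ 3 (Function.uncurry f) (ρ, t)) (hf₀ : f ρ t ≠ 0)
    (hf₁ : dRho f ρ t ≠ 0)
    (hpde : ∀ᶠ s in 𝓝 ρ, dTime f s t = logDRho (dRho f) s t + κ * logDRho f s t - c) :
    dTime (dRho f) ρ t = dRho (logDRho (dRho f)) ρ t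
      + κ * (logDRho f ρ t * (logDRho (dRho f) ρ t - logDRho f ρ t)) := by
  have hf₂ : ContDiffAt ℝ 2 (Function.uncurry f) (ρ, t) := hf.of_le (by norm_num)
  have hu : ContDiffAt ℝ 1 (Function.uncurry (logDRho (dRho f))) (ρ, t) :=
    contDiffAt_logDRho (contDiffAt_dRho (k := 2) hf (by norm_num)) (by norm_num) hf₁
  rw [dTime_dRho_comm hf₂]
  exact (EventuallyEq.deriv_eq hpde).trans (((hasDerivAt_dRho (hu.differentiableAt one_ne_zero)).add
    ((hasDerivAt_logDRho hf₂ hf₀ hf₁).const_mul κ)).sub_const c).deriv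

lemma dTime_dRho_dRho_of_pde (hf : ContDiffAt ℝ 4 (Function.uncurry f) (ρ, t)) (hf₀ : f ρ t ≠ 0)
    (hf₁ : dRho f ρ t ≠ 0)
    (hpde : ∀ᶠ s in 𝓝 ρ, dTime f s t = logDRho (dRho f) s t + κ * logDRho f s t - c) :
    dTime (dRho (dRho f)) ρ t = dRho (dRho (logDRho (dRho f))) ρ t
      + κ * logDRho f ρ t * (dRho (logDRho (dRho f)) ρ t
        + (logDRho (dRho f) ρ t - logDRho f ρ t)
          * (logDRho (dRho f) ρ t - 2 * logDRho f ρ t)) := by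
  have hfρ : ContDiffAt ℝ 3 (Function.uncurry (dRho f)) (ρ, t) :=
    contDiffAt_dRho hf (by norm_num)
  have hu : ContDiffAt ℝ 2 (Function.uncurry (logDRho (dRho f))) (ρ, t) :=
    contDiffAt_logDRho hfρ (by norm_num) hf₁
  have huρ : ContDiffAt ℝ 1 (Function.uncurry (dRho (logDRho (dRho f)))) (ρ, t) :=
    contDiffAt_dRho hu (by norm_num)
  have hslice : Tendsto (fun s : ℝ => (s, t)) (𝓝 ρ) (𝓝 (ρ, t)) :=
    Continuous.tendsto' (by fun_prop) _ _ rfl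
  have hft : (fun s => dTime (dRho f) s t) =ᶠ[𝓝 ρ] fun s => dRho (logDRho (dRho f)) s t
      + κ * (logDRho f s t * (logDRho (dRho f) s t - logDRho f s t)) := by
    filter_upwards [hslice.eventually (hf.eventually (by simp)),
      hslice.eventually (hf.continuousAt.eventually_ne hf₀),
      hslice.eventually (hfρ.continuousAt.eventually_ne hf₁), hpde.eventually_nhds]
      with s hs hs₀ hs₁ hs_pde
    exact dTime_dRho_of_pde (hs.of_le (by norm_num)) hs₀ hs₁ hs_pde
  have hw := hasDerivAt_logDRho (hf.of_le (by norm_num)) hf₀ hf₁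
  rw [dTime_dRho_comm (hfρ.of_le (by norm_num))]
  refine (hft.deriv_eq.trans ((hasDerivAt_dRho (huρ.differentiableAt one_ne_zero)).add ((hw.mul
    ((hasDerivAt_dRho (hu.differentiableAt two_ne_zero)).sub hw)).const_mul κ)).deriv).trans ?_
  simp only [Pi.sub_apply]
  ring

lemma dRho_mul_dTime_logDRho_dRho_of_pde (hf : ContDiffAt ℝ 4 (Function.uncurry f) (ρ, t))
    (hf₀ : f ρ t ≠ 0) (hf₁ : dRho f ρ t ≠ 0)
    (hpde : ∀ᶠ s in 𝓝 ρ, dTime f s t = logDRho (dRho f) s t + κ * logDRho f s t - c) :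
    dRho f ρ t * dTime (logDRho (dRho f)) ρ t
      = dRho (dRho (logDRho (dRho f))) ρ t
        + (κ * logDRho f ρ t - logDRho (dRho f) ρ t) * dRho (logDRho (dRho f)) ρ t
        - 2 * κ * logDRho f ρ t ^ 2 * (logDRho (dRho f) ρ t - logDRho f ρ t) := by
  rw [mul_dTime_logDRho (contDiffAt_dRho hf (by norm_num)) hf₁,
    dTime_dRho_dRho_of_pde hf hf₀ hf₁ hpde,
    dTime_dRho_of_pde (hf.of_le (by norm_num)) hf₀ hf₁ hpde]
  ring

lemma logDRho_le_logDRho_dRho_of_isLocalMinOn (hκ : 0 < κ)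
    (hf : ContDiffAt ℝ 4 (Function.uncurry f) (ρ, t)) (hf₀ : f ρ t ≠ 0) (hf₁ : 0 < dRho f ρ t)
    (hpde : ∀ᶠ s in 𝓝 ρ, dTime f s t = logDRho (dRho f) s t + κ * logDRho f s t - c)
    (hmin : IsLocalMinOn (Function.uncurry (logDRho (dRho f))) (univ ×ˢ Iic t) (ρ, t)) :
    logDRho f ρ t ≤ logDRho (dRho f) ρ t := by
  have hu : ContDiffAt ℝ 2 (Function.uncurry (logDRho (dRho f))) (ρ, t) :=
    contDiffAt_logDRho (contDiffAt_dRho (k := 3) hf (by norm_num)) (by norm_num) hf₁.ne'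
  have hspace : IsLocalMin (fun s => logDRho (dRho f) s t) ρ :=
    isLocalMinOn_univ_iff.1 <| hmin.comp_continuousOn (g := fun s : ℝ => (s, t))
      (fun _ _ => ⟨mem_univ _, self_mem_Iic⟩) (by fun_prop) (mem_univ ρ)
  have htime : IsLocalMinOn (fun τ => logDRho (dRho f) ρ τ) (Iic t) t :=
    hmin.comp_continuousOn (g := fun τ : ℝ => (ρ, τ))
      (fun _ hτ => ⟨mem_univ _, hτ⟩) (by fun_prop) self_mem_Iic
  have hu_ρ : dRho (logDRho (dRho f)) ρ t = 0 := hspace.deriv_eq_zero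
  have hu_ρρ : 0 ≤ dRho (dRho (logDRho (dRho f))) ρ t :=
    deriv_deriv_nonneg_of_isLocalMin hspace
      (hasDerivAt_dRho (hu.differentiableAt two_ne_zero)).continuousAt
  have hu_t : dTime (logDRho (dRho f)) ρ t ≤ 0 := deriv_nonpos_of_isLocalMinOn_Iic htime
  have hevol := dRho_mul_dTime_logDRho_dRho_of_pde hf hf₀ hf₁.ne' hpde
  rw [hu_ρ, mul_zero, add_zero] at hevol
  have hw : logDRho f ρ t ≠ 0 := div_ne_zero hf₁.ne' hf₀
  have hprod :
      0 ≤ 2 * κ * logDRho f ρ t ^ 2 * (logDRho (dRho f) ρ t - logDRho f ρ t) := by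
    linarith [mul_nonpos_of_nonneg_of_nonpos hf₁.le hu_t]
  exact sub_nonneg.1 ((mul_nonneg_iff_of_pos_left (by positivity)).1 hprod)

end Evolution

theorem stmt7_general {κ c T τ : ℝ} (hκ : 0 < κ) (hτ : τ < T) {f : ℝ → ℝ → ℝ}
    (hf : ContDiffOn ℝ 4 (Function.uncurry f) (univ ×ˢ Ico 0 T))
    (hf₀ : ∀ ρ t, t ∈ Ico 0 T → 0 < f ρ t) (hf₁ : ∀ ρ t, t ∈ Ico 0 T → 0 < dRho f ρ t)
    (hpde : ∀ ρ t, t ∈ Ioo 0 T →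
      dTime f ρ t = logDRho (dRho f) ρ t + κ * logDRho f ρ t - c)
    {ρ₀ t₀ : ℝ} (ht₀ : t₀ ∈ Icc 0 τ)
    (hmin : ∀ ρ t, t ∈ Icc 0 τ → logDRho (dRho f) ρ₀ t₀ ≤ logDRho (dRho f) ρ t) :
    min (⨅ σ : ℝ, logDRho (dRho f) σ 0) (logDRho f ρ₀ t₀) ≤ logDRho (dRho f) ρ₀ t₀ ∧
    ∀ ρ t, t ∈ Icc 0 τ →
      min (⨅ σ : ℝ, logDRho (dRho f) σ 0) 0 ≤ logDRho (dRho f) ρ t := by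
  have ht₀T : t₀ ∈ Ico 0 T := ⟨ht₀.1, ht₀.2.trans_lt hτ⟩
  have hbound :
      min (⨅ σ : ℝ, logDRho (dRho f) σ 0) (logDRho f ρ₀ t₀) ≤ logDRho (dRho f) ρ₀ t₀ := by
    rcases ht₀.1.eq_or_lt with rfl | hpos
    · exact min_le_of_left_le (ciInf_le ⟨_, forall_mem_range.2 fun σ => hmin σ 0 ht₀⟩ ρ₀)
    · have hint : t₀ ∈ Ioo 0 T := ⟨hpos, ht₀T.2⟩
      have hf_at : ContDiffAt ℝ 4 (Function.uncurry f) (ρ₀, t₀) :=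
        hf.contDiffAt (prod_mem_nhds univ_mem (Ico_mem_nhds hpos ht₀T.2))
      have hpast :
          IsLocalMinOn (Function.uncurry (logDRho (dRho f))) (univ ×ˢ Iic t₀) (ρ₀, t₀) := by
        filter_upwards [self_mem_nhdsWithin, mem_nhdsWithin_of_mem_nhds
          (prod_mem_nhds univ_mem (Ioi_mem_nhds hpos))] with p hp hp_pos
        exact hmin p.1 p.2 ⟨hp_pos.2.le, hp.2.trans ht₀.2⟩
      exact min_le_of_right_le <| logDRho_le_logDRho_dRho_of_isLocalMinOn hκ hf_at
        (hf₀ ρ₀ t₀ ht₀T).ne' (hf₁ ρ₀ t₀ ht₀T) (.of_forall fun s => hpde s t₀ hint) hpast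
  have hlog : 0 ≤ logDRho f ρ₀ t₀ := (div_pos (hf₁ ρ₀ t₀ ht₀T) (hf₀ ρ₀ t₀ ht₀T)).le
  exact ⟨hbound, fun ρ t ht =>
    (min_le_min_left _ hlog).trans (hbound.trans (hmin ρ t ht))⟩

/-- Lower-bound half of part (2) of Lemma 5.2 (est_2): if `f_ρρ/f_ρ` attains its infimum
over the strip `ℝ × [0, T−ε]` at `(ρ*, t*)`, then this infimum is at least
`min( inf_σ (f_ρρ/f_ρ)(σ, 0), (f_ρ/f)(ρ*, t*) )`; in particular
`f_ρρ/f_ρ ≥ min( inf_σ (f_ρρ/f_ρ)(σ, 0), 0 )` on the strip. -/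
theorem stmt7 (n : ℕ) (hn : 1 ≤ n) (ν lam T : ℝ) (hlam : 0 < lam) (hT : 0 < T)
    (f : ℝ → ℝ → ℝ)
    (hf : ContDiffOn ℝ (⊤ : ℕ∞) (fun p : ℝ × ℝ => f p.1 p.2) (univ ×ˢ Ico 0 T))
    (hfpos : ∀ ρ t, t ∈ Ico 0 T → 0 < f ρ t)
    (hfρpos : ∀ ρ t, t ∈ Ico 0 T → 0 < dRho f ρ t)
    (hPDE : ∀ ρ t, t ∈ Ico 0 T →
      deriv (fun τ => f ρ τ) t
        = dRho (dRho f) ρ t / dRho f ρ t + n * dRho f ρ t / f ρ t - ν / lam)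
    (ε : ℝ) (hε : 0 < ε) (hεT : ε < T)
    (ρstar tstar : ℝ) (htstar : tstar ∈ Icc 0 (T - ε))
    (hmin : ∀ ρ t, t ∈ Icc 0 (T - ε) →
      dRho (dRho f) ρstar tstar / dRho f ρstar tstar ≤ dRho (dRho f) ρ t / dRho f ρ t) :
    min (⨅ σ : ℝ, dRho (dRho f) σ 0 / dRho f σ 0) (dRho f ρstar tstar / f ρstar tstar)
      ≤ dRho (dRho f) ρstar tstar / dRho f ρstar tstar ∧
    ∀ ρ t, t ∈ Icc 0 (T - ε) →
      min (⨅ σ : ℝ, dRho (dRho f) σ 0 / dRho f σ 0) 0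
        ≤ dRho (dRho f) ρ t / dRho f ρ t := by
  have hpde : ∀ ρ t, t ∈ Ioo 0 T →
      dTime f ρ t = logDRho (dRho f) ρ t + n * logDRho f ρ t - ν / lam := fun ρ t ht =>
    (hPDE ρ t (Ioo_subset_Ico_self ht)).trans (by simp only [logDRho, mul_div_assoc])
  exact stmt7_general (Nat.cast_pos.2 hn) (sub_lt_self T hε) (contDiffOn_infty.1 hf 4) hfpos
    hfρpos hpde htstar hmin
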